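/- arXiv:2410.00530 — 2 statements merged into one kernel-verified Lean document; each statement's English description precedes it below -/
import Mathlib

section
/- Let X be a metric space and ℓ : X → [0,∞) lsc with inf_X ℓ = 0. Suppose there exists a sequence (x̄_n) with ∑ ℓ(x̄_n) d(x̄_n, x̄_{n+1}) < ∞ and ℓ(x̄_n) → 0. Define u₀(x) = inf { ∑_{n=0}^∞ ℓ(x_n) d(x_n, x_{n+1}) : x₀ = x, ℓ(x_n) → 0 }. Then u₀ is a solution of the global Eikonal equation: u₀ is lsc, inf_X u₀ = 0, and G[u₀](x) = ℓ(x) for all x ∈ X. -/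
open Filter Topology ENNReal

/-- The global slope of a nonnegative extended-real valued function `u : X → [0, ∞]`:
`G[u](x) = sup_{y ≠ x} (u x - u y)⁺ / d(x,y)` when `u x < ∞` (truncated subtraction in
`ℝ≥0∞` is exactly the positive part), and `∞` when `u x = ∞`. -/
noncomputable def gslopeN {X : Type*} [MetricSpace X] (u : X → ℝ≥0∞) (x : X) : ℝ≥0∞ :=
  if u x = ⊤ then ⊤
  else ⨆ (y : X) (_ : y ≠ x), (u x - u y) / edist x y

/-- The operator `T u (x) = inf_y (u y + ℓ x · d(x,y)) / (1 + λ · d(x,y))` acting on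
nonnegative extended-real valued functions. -/
noncomputable def TopE {X : Type*} [MetricSpace X] (lam : ℝ) (ℓ : X → ℝ)
    (u : X → ℝ≥0∞) (x : X) : ℝ≥0∞ :=
  ⨅ y : X, (u y + ENNReal.ofReal (ℓ x) * edist x y) / (1 + ENNReal.ofReal lam * edist x y)

/-!
Prepending a point `x` to a sequence starting at `y` gives `u₀ x ≤ ℓ x * d(x, y) + u₀ y`, whence
lower semicontinuity, finiteness and `G[u₀] ≤ ℓ`; the tails of a sequence of finite cost give
`inf u₀ = 0`.  For `G[u₀] ≥ ℓ`, let `c < c' < ℓ x` and choose `r` with `c' < ℓ` on the ball of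
radius `r` around `x`.  Take a sequence from `x` of cost less than `u₀ x + (c' - c) r` and stop it
at the first point `y` with `ℓ y ≤ c'`.  Up to `y` it has cost at least `c' d(x, y)`, and
`d(x, y) ≥ r`, so the excess `(c' - c) r` is absorbed and `c d(x, y) + u₀ y ≤ u₀ x`.
-/

section GlobalSlope

variable {X : Type*} [MetricSpace X] {u : X → ℝ≥0∞} {x : X} {c : ℝ≥0∞}

theorem gslopeN_le_of_le_mul_edist_add (hux : u x ≠ ⊤) (h : ∀ y, u x ≤ c * edist x y + u y) :
    gslopeN u x ≤ c := by
  rw [gslopeN, if_neg hux]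
  exact iSup₂_le fun y _ ↦ ENNReal.div_le_of_le_mul (tsub_le_iff_right.2 (h y))

theorem le_gslopeN_of_mul_edist_add_le {y : X} (hyx : y ≠ x) (h : c * edist x y + u y ≤ u x) :
    c ≤ gslopeN u x := by
  by_cases hux : u x = ⊤
  · simp [gslopeN, hux]
  have huy : u y ≠ ⊤ := ne_top_of_le_ne_top hux (le_add_self.trans h)
  rw [gslopeN, if_neg hux]
  calc c ≤ (u x - u y) / edist x y :=
        (ENNReal.le_div_iff_mul_le (Or.inl (edist_pos.2 hyx.symm).ne')
          (Or.inl (edist_ne_top x y))).2 (ENNReal.le_sub_of_add_le_right huy h)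
    _ ≤ ⨆ (z : X) (_ : z ≠ x), (u x - u z) / edist x z :=
        le_iSup₂ (f := fun z (_ : z ≠ x) ↦ (u x - u z) / edist x z) y hyx

end GlobalSlope

theorem lowerSemicontinuous_of_le_mul_edist_add {X : Type*} [PseudoEMetricSpace X]
    {u L : X → ℝ≥0∞} (hL : ∀ x, L x ≠ ⊤) (h : ∀ x y, u x ≤ L x * edist x y + u y) :
    LowerSemicontinuous u := by
  intro x a ha
  have hlim : Tendsto (fun y ↦ L x * edist x y + a) (𝓝 x) (𝓝 a) := by
    have hedist : Tendsto (fun y ↦ edist x y) (𝓝 x) (𝓝 0) :=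
      (continuous_const.edist continuous_id).tendsto' x 0 (edist_self x)
    simpa using (ENNReal.Tendsto.const_mul hedist (Or.inr (hL x))).add_const a
  filter_upwards [hlim.eventually_lt_const ha] with y hy
  exact lt_of_add_lt_add_left (hy.trans_le (h x y))

section SeriesCost

variable {X : Type*} [PseudoEMetricSpace X]

/-- The cost `∑ ℓ(x_n) d(x_n, x_{n+1})` of an infinite sequence `σ = (x_n)`, the density `ℓ` being
evaluated at the starting point of each step. -/
noncomputable def seriesCost (ℓ : X → ℝ≥0∞) (σ : ℕ → X) : ℝ≥0∞ :=
  ∑' n, ℓ (σ n) * edist (σ n) (σ (n + 1))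

/-- The paper's function `u₀` for an extended-real valued density `ℓ`: the infimal cost of the
sequences starting at `x` along which `ℓ` tends to `0`. -/
noncomputable def infSeriesCost (ℓ : X → ℝ≥0∞) (x : X) : ℝ≥0∞ :=
  ⨅ (σ : ℕ → X) (_ : σ 0 = x ∧ Tendsto (fun n ↦ ℓ (σ n)) atTop (𝓝 0)), seriesCost ℓ σ

variable {ℓ : X → ℝ≥0∞} {σ : ℕ → X}

theorem seriesCost_tail (ℓ : X → ℝ≥0∞) (σ : ℕ → X) (N : ℕ) :
    seriesCost ℓ (fun n ↦ σ (n + N)) =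
      ∑' n, ℓ (σ (n + N)) * edist (σ (n + N)) (σ (n + N + 1)) := by
  simp only [seriesCost, add_right_comm]

theorem sum_add_seriesCost_tail (ℓ : X → ℝ≥0∞) (σ : ℕ → X) (N : ℕ) :
    ∑ n ∈ Finset.range N, ℓ (σ n) * edist (σ n) (σ (n + 1)) +
      seriesCost ℓ (fun n ↦ σ (n + N)) = seriesCost ℓ σ := by
  rw [seriesCost_tail]
  exact ENNReal.summable.sum_add_tsum_nat_add'

theorem tendsto_seriesCost_tail (hcost : seriesCost ℓ σ ≠ ⊤) :
    Tendsto (fun N ↦ seriesCost ℓ (fun n ↦ σ (n + N))) atTop (𝓝 0) := by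
  simp only [seriesCost_tail]
  exact ENNReal.tendsto_sum_nat_add _ hcost

theorem infSeriesCost_le_seriesCost (hσ : Tendsto (fun n ↦ ℓ (σ n)) atTop (𝓝 0)) :
    infSeriesCost ℓ (σ 0) ≤ seriesCost ℓ σ :=
  iInf₂_le σ ⟨rfl, hσ⟩

theorem infSeriesCost_le_seriesCost_tail (hσ : Tendsto (fun n ↦ ℓ (σ n)) atTop (𝓝 0)) (N : ℕ) :
    infSeriesCost ℓ (σ N) ≤ seriesCost ℓ (fun n ↦ σ (n + N)) := by
  simpa only [zero_add] using
    infSeriesCost_le_seriesCost (σ := fun n ↦ σ (n + N)) ((tendsto_add_atTop_iff_nat N).2 hσ)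

theorem infSeriesCost_le_mul_edist_add (ℓ : X → ℝ≥0∞) (x y : X) :
    infSeriesCost ℓ x ≤ ℓ x * edist x y + infSeriesCost ℓ y := by
  rw [infSeriesCost.eq_def ℓ y]
  simp only [ENNReal.add_iInf]
  refine le_iInf₂ fun σ ⟨hσy, hσ⟩ ↦ ?_
  let τ : ℕ → X := fun n ↦ Nat.casesOn n x σ
  have hτ : Tendsto (fun n ↦ ℓ (τ n)) atTop (𝓝 0) := (tendsto_add_atTop_iff_nat 1).1 hσ
  calc infSeriesCost ℓ x ≤ seriesCost ℓ τ := infSeriesCost_le_seriesCost hτ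
    _ = ℓ x * edist x (σ 0) + seriesCost ℓ σ := tsum_eq_zero_add' ENNReal.summable
    _ = ℓ x * edist x y + seriesCost ℓ σ := by rw [hσy]

theorem iInf_infSeriesCost_eq_zero (hσ : Tendsto (fun n ↦ ℓ (σ n)) atTop (𝓝 0))
    (hcost : seriesCost ℓ σ ≠ ⊤) : ⨅ x, infSeriesCost ℓ x = 0 :=
  nonpos_iff_eq_zero.1 <| ge_of_tendsto' (tendsto_seriesCost_tail hcost) fun N ↦
    (iInf_le _ (σ N)).trans (infSeriesCost_le_seriesCost_tail hσ N)

theorem mul_edist_le_sum_range {c : ℝ≥0∞} {N : ℕ} (hc : ∀ n < N, c ≤ ℓ (σ n)) :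
    c * edist (σ 0) (σ N) ≤ ∑ n ∈ Finset.range N, ℓ (σ n) * edist (σ n) (σ (n + 1)) :=
  calc c * edist (σ 0) (σ N) ≤ c * ∑ n ∈ Finset.range N, edist (σ n) (σ (n + 1)) := by
        gcongr
        exact edist_le_range_sum_edist σ N
    _ = ∑ n ∈ Finset.range N, c * edist (σ n) (σ (n + 1)) := Finset.mul_sum ..
    _ ≤ ∑ n ∈ Finset.range N, ℓ (σ n) * edist (σ n) (σ (n + 1)) := by
        gcongr with n hn
        exact hc n (Finset.mem_range.1 hn)

theorem exists_le_and_mul_edist_add_infSeriesCost_le {c : ℝ≥0∞} (hc : 0 < c)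
    (hσ : Tendsto (fun n ↦ ℓ (σ n)) atTop (𝓝 0)) :
    ∃ y, ℓ y ≤ c ∧ c * edist (σ 0) y + infSeriesCost ℓ y ≤ seriesCost ℓ σ := by
  classical
  have hexit : ∃ n, ℓ (σ n) ≤ c := (hσ.eventually_le_const hc).exists
  obtain ⟨N, hN, hmin⟩ := Nat.findX hexit
  refine ⟨σ N, hN, ?_⟩
  rw [← sum_add_seriesCost_tail ℓ σ N]
  exact add_le_add (mul_edist_le_sum_range fun n hn ↦ (not_le.1 (hmin n hn)).le)
    (infSeriesCost_le_seriesCost_tail hσ N)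

theorem exists_mul_edist_add_infSeriesCost_le {x : X} {c : ℝ≥0∞}
    (hℓ : LowerSemicontinuousAt ℓ x) (hx : infSeriesCost ℓ x ≠ ⊤) (hc : c < ℓ x) :
    ∃ y, 0 < edist x y ∧ c * edist x y + infSeriesCost ℓ y ≤ infSeriesCost ℓ x := by
  obtain ⟨c', hcc', hc'⟩ := exists_between hc
  obtain ⟨R, hR, hball⟩ := EMetric.mem_nhds_iff.1 (hℓ c' hc')
  obtain ⟨r, hr, hrR⟩ := exists_between hR
  have hε : (c' - c) * r ≠ 0 := mul_ne_zero (tsub_pos_of_lt hcc').ne' hr.ne'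
  have hε_top : (c' - c) * r ≠ ⊤ :=
    ENNReal.mul_ne_top (ENNReal.sub_ne_top hc'.ne_top) hrR.ne_top
  obtain ⟨σ, ⟨rfl, hσ⟩, hcost⟩ :
      ∃ σ : ℕ → X, (σ 0 = x ∧ Tendsto (fun n ↦ ℓ (σ n)) atTop (𝓝 0)) ∧
        seriesCost ℓ σ < infSeriesCost ℓ x + (c' - c) * r := by
    simpa only [infSeriesCost, iInf_lt_iff, exists_prop] using ENNReal.lt_add_right hx hε
  obtain ⟨y, hy, hle⟩ := exists_le_and_mul_edist_add_infSeriesCost_le (pos_of_gt hcc') hσ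
  have hry : r ≤ edist (σ 0) y := by
    by_contra! hlt
    exact hy.not_gt (hball (by simpa only [Metric.mem_eball'] using hlt.trans hrR))
  refine ⟨y, hr.trans_le hry, (ENNReal.add_le_add_iff_right hε_top).1 ?_⟩
  calc c * edist (σ 0) y + infSeriesCost ℓ y + (c' - c) * r
      ≤ c * edist (σ 0) y + infSeriesCost ℓ y + (c' - c) * edist (σ 0) y := by gcongr
    _ = c' * edist (σ 0) y + infSeriesCost ℓ y := by
        rw [add_right_comm, ← add_mul, add_tsub_cancel_of_le hcc'.le]
    _ ≤ infSeriesCost ℓ (σ 0) + (c' - c) * r := hle.trans hcost.le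

end SeriesCost

theorem gslopeN_infSeriesCost {X : Type*} [MetricSpace X] {ℓ : X → ℝ≥0∞} {x : X}
    (hℓ : LowerSemicontinuousAt ℓ x) (hx : infSeriesCost ℓ x ≠ ⊤) :
    gslopeN (infSeriesCost ℓ) x = ℓ x := by
  refine le_antisymm
    (gslopeN_le_of_le_mul_edist_add hx (infSeriesCost_le_mul_edist_add ℓ x))
    (le_of_forall_lt_imp_le_of_dense fun c hc ↦ ?_)
  obtain ⟨y, hxy, hle⟩ := exists_mul_edist_add_infSeriesCost_le hℓ hx hc
  exact le_gslopeN_of_mul_edist_add_le (edist_pos.1 hxy).symm hle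

theorem infSeriesCost_ne_top {X : Type*} [PseudoMetricSpace X] {ℓ : X → ℝ≥0∞} {σ : ℕ → X} {x : X}
    (hx : ℓ x ≠ ⊤) (hσ : Tendsto (fun n ↦ ℓ (σ n)) atTop (𝓝 0)) (hcost : seriesCost ℓ σ ≠ ⊤) :
    infSeriesCost ℓ x ≠ ⊤ :=
  ne_top_of_le_ne_top
    (ENNReal.add_ne_top.2 ⟨ENNReal.mul_ne_top hx (edist_ne_top x (σ 0)),
      ne_top_of_le_ne_top hcost (infSeriesCost_le_seriesCost hσ)⟩)
    (infSeriesCost_le_mul_edist_add ℓ x (σ 0))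

theorem tendsto_ofReal_zero_iff {α : Type*} {l : Filter α} {f : α → ℝ} (hf : ∀ a, 0 ≤ f a) :
    Tendsto (fun a ↦ ENNReal.ofReal (f a)) l (𝓝 0) ↔ Tendsto f l (𝓝 0) := by
  simpa only [ENNReal.toReal_ofReal (hf _), ENNReal.toReal_zero] using
    (ENNReal.tendsto_toReal_iff (fun a ↦ ENNReal.ofReal_ne_top (r := f a))
      ENNReal.zero_ne_top).symm

/-- Under hypothesis (H₀), the function
`u₀(x) = inf { ∑ ℓ(x_n) d(x_n, x_{n+1}) : x₀ = x, ℓ(x_n) → 0 }` is a solution of the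
global Eikonal equation: `u₀` is lsc, real-valued, `inf u₀ = 0`, and `G[u₀] = ℓ`. -/
theorem series_formula_solution {X : Type*} [MetricSpace X] [Nonempty X]
    (ℓ : X → ℝ) (hℓ : LowerSemicontinuous ℓ)
    (hℓ0 : ∀ x, 0 ≤ ℓ x) (hinfℓ : ⨅ x, ℓ x = 0)
    (H0 : ∃ σ : ℕ → X, Tendsto (fun n => ℓ (σ n)) atTop (𝓝 0) ∧
      ∑' n, ENNReal.ofReal (ℓ (σ n)) * edist (σ n) (σ (n + 1)) < ⊤) :
    let u₀ : X → ℝ≥0∞ := fun x =>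
      ⨅ (σ : ℕ → X) (_ : σ 0 = x ∧ Tendsto (fun n => ℓ (σ n)) atTop (𝓝 0)),
        ∑' n, ENNReal.ofReal (ℓ (σ n)) * edist (σ n) (σ (n + 1))
    LowerSemicontinuous u₀ ∧ (∀ x, u₀ x ≠ ⊤) ∧ (⨅ x, u₀ x = 0) ∧
      ∀ x, gslopeN u₀ x = ENNReal.ofReal (ℓ x) := by
  intro u₀
  let L : X → ℝ≥0∞ := fun x ↦ ENNReal.ofReal (ℓ x)
  have hL : LowerSemicontinuous L :=
    ENNReal.continuous_ofReal.comp_lowerSemicontinuous hℓ fun _ _ ↦ ENNReal.ofReal_le_ofReal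
  have hL_top (x : X) : L x ≠ ⊤ := ENNReal.ofReal_ne_top
  have hL_zero (σ : ℕ → X) :
      Tendsto (fun n ↦ L (σ n)) atTop (𝓝 0) ↔ Tendsto (fun n ↦ ℓ (σ n)) atTop (𝓝 0) :=
    tendsto_ofReal_zero_iff fun n ↦ hℓ0 (σ n)
  have hu₀ : u₀ = infSeriesCost L := by
    funext x
    simp only [infSeriesCost, hL_zero]
    rfl
  obtain ⟨σ, hσ, hcost⟩ := H0
  rw [← hL_zero] at hσ
  have hfin (x : X) : infSeriesCost L x ≠ ⊤ := infSeriesCost_ne_top (hL_top x) hσ hcost.ne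
  rw [hu₀]
  exact ⟨lowerSemicontinuous_of_le_mul_edist_add hL_top (infSeriesCost_le_mul_edist_add L), hfin,
    iInf_infSeriesCost_eq_zero hσ hcost.ne, fun x ↦ gslopeN_infSeriesCost (hL x) (hfin x)⟩
end

section
/- Let X be a complete metric space and f, g : X → ℝ ∪ {+∞} proper lsc functions with g bounded from below. If G[f](x) ≤ G[g](x) for every x ∈ X, then f is bounded from below and f − inf_X f ≤ g − inf_X g on X. Consequently, if G[f] = G[g] everywhere, then f = g + c for some constant c ∈ ℝ. -/
open Filter Topology ENNReal

/-- The global slope of a function `u : X → ℝ ∪ {+∞}` (encoded as `X → EReal`):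
`G[u](x) = sup_{y ≠ x} (u x - u y)⁺ / d(x,y)` when `u x < +∞`, and `+∞` when `u x = +∞`.
(It is meant to be used for functions that never take the value `⊥`.) -/
noncomputable def gslopeE {X : Type*} [MetricSpace X] (u : X → EReal) (x : X) : ℝ≥0∞ :=
  if u x = ⊤ then ⊤
  else ⨆ (y : X) (_ : y ≠ x), ENNReal.ofReal ((u x - u y).toReal / dist x y)

/-!
Let `s q ^ n` be slopes decreasing to `0`, with `q < 1`. Ekeland's principle produces points `u n`
where the slope of `g` is at most `s q ^ n`, and such that `s q ^ (n + 1) d(u n, u (n + 1))` is at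
most the drop of `g` from `u n` to `u (n + 1)`. The slope of `f` at `u n` is at most `s q ^ n` as
well, so each drop of `f` is at most `q⁻¹` times the drop of `g`. These telescope, and the final
error `f (u n) - f y ≤ s q ^ n d(u n, y)` vanishes in the limit, because `g` has only a finite
amount to lose. Letting `q → 1` gives `f x - f y ≤ g x - inf g` wherever `g` has finite slope;
such points approximate every point `x` of the domain of `g` with values of `g` at most `g x`,
and `f` is lower semicontinuous.
-/

section Preliminaries

variable {α : Type*}

theorem exists_seq_of_forall_exists {p : ℕ → α → Prop} {r : ℕ → α → α → Prop} {a : α}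
    (ha : p 0 a) (h : ∀ n x, p n x → ∃ y, p (n + 1) y ∧ r n x y) :
    ∃ u : ℕ → α, u 0 = a ∧ ∀ n, p n (u n) ∧ r n (u n) (u (n + 1)) := by
  have : Nonempty α := ⟨a⟩
  choose! F hp hr using h
  let u : ℕ → α := fun n => Nat.rec a F n
  have hu : ∀ n, p n (u n) := fun n => by
    induction n with
    | zero => exact ha
    | succ n ih => exact hp n _ ih
  exact ⟨u, rfl, fun n => ⟨hu n, hr n _ (hu n)⟩⟩

theorem exists_forall_lt_add_of_bddBelow_image {S : Set α} {φ : α → ℝ} (hS : S.Nonempty)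
    (hφ : BddBelow (φ '' S)) {ε : ℝ} (hε : 0 < ε) : ∃ y ∈ S, ∀ w ∈ S, φ y < φ w + ε := by
  obtain ⟨_, ⟨y, hy, rfl⟩, hlt⟩ := Real.lt_sInf_add_pos (hS.image φ) hε
  exact ⟨y, hy, fun w hw => by linarith [csInf_le hφ (Set.mem_image_of_mem φ hw)]⟩

theorem isClosed_setOf_add_le [TopologicalSpace α] {A : Set α} {φ h : α → ℝ}
    (hφ : ∀ c, IsClosed {x | x ∈ A ∧ φ x ≤ c}) (hh : Continuous h) (c : ℝ) :
    IsClosed {x | x ∈ A ∧ φ x + h x ≤ c} := by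
  refine isClosed_of_closure_subset fun x hx => ?_
  have hsub : ∀ b, c - h x < b → x ∈ A ∧ φ x ≤ b := fun b hb => by
    have hopen : IsOpen {w | c - h w < b} := isOpen_lt (by fun_prop) continuous_const
    refine (hφ b).closure_subset_iff.2 ?_ (hopen.inter_closure ⟨hb, hx⟩)
    rintro w ⟨hwb : c - h w < b, hwA, hwc⟩
    exact ⟨hwA, by linarith⟩
  refine ⟨(hsub _ (lt_add_one _)).1, ?_⟩
  linarith [le_of_forall_gt_imp_ge_of_dense fun b hb => (hsub b hb).2]

end Preliminaries

section RealValued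

variable {X : Type*} [PseudoMetricSpace X] {A B : Set X} {φ ψ : X → ℝ} {s m : ℝ} {x y : X}

/-- The global slope of `φ` at the point `x` of its domain `A` is at most `s`. The pair `(A, φ)`
encodes the extended real function equal to `φ` on `A` and to `+∞` elsewhere; it is lower
semicontinuous when all the sets `{x | x ∈ A ∧ φ x ≤ c}` are closed. -/
def SlopeLE (A : Set X) (φ : X → ℝ) (s : ℝ) (x : X) : Prop :=
  x ∈ A ∧ ∀ y ∈ A, φ x - φ y ≤ s * dist x y

/-- The points of `A` that can be reached from `x` while `φ` drops by at least `s` times the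
distance, i.e. the upper section of `x` for the order used in Ekeland's variational principle. -/
def descentSet (A : Set X) (φ : X → ℝ) (s : ℝ) (x : X) : Set X :=
  {y | y ∈ A ∧ φ y + s * dist x y ≤ φ x}

theorem mem_descentSet_self (hx : x ∈ A) : x ∈ descentSet A φ s x :=
  ⟨hx, by simp only [dist_self, mul_zero, add_zero, le_refl]⟩

theorem descentSet_subset_of_mem (hs : 0 ≤ s) (hy : y ∈ descentSet A φ s x) :
    descentSet A φ s y ⊆ descentSet A φ s x := by
  rintro z ⟨hzA, hz⟩
  exact ⟨hzA, by linarith [hy.2, mul_le_mul_of_nonneg_left (dist_triangle x y z) hs]⟩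

theorem le_of_mem_descentSet (hs : 0 ≤ s) (hy : y ∈ descentSet A φ s x) : φ y ≤ φ x := by
  linarith [hy.2, mul_nonneg hs (dist_nonneg (x := x) (y := y))]

theorem isClosed_descentSet (hφ : ∀ c, IsClosed {x | x ∈ A ∧ φ x ≤ c}) :
    IsClosed (descentSet A φ s x) :=
  isClosed_setOf_add_le hφ (by fun_prop) (φ x)

theorem slopeLE_of_forall_mem_descentSet (hx : x ∈ A) (h : ∀ y ∈ descentSet A φ s x, φ x ≤ φ y)
    (hs : 0 ≤ s) : SlopeLE A φ s x := by
  refine ⟨hx, fun y hy => ?_⟩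
  by_contra! hlt
  have hyx := h y ⟨hy, by linarith⟩
  linarith [mul_nonneg hs (dist_nonneg (x := x) (y := y))]

theorem exists_seq_descentSet (hb : BddBelow (φ '' A)) (hx : x ∈ A) {ε : ℕ → ℝ}
    (hε : ∀ n, 0 < ε n) : ∃ u : ℕ → X, u 0 = x ∧ ∀ n, u (n + 1) ∈ descentSet A φ s (u n) ∧
      ∀ w ∈ descentSet A φ s (u n), φ (u (n + 1)) < φ w + ε n := by
  obtain ⟨u, hu0, hu⟩ := exists_seq_of_forall_exists (p := fun _ x => x ∈ A)
    (r := fun n x y => y ∈ descentSet A φ s x ∧ ∀ w ∈ descentSet A φ s x, φ y < φ w + ε n)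
    hx fun n x hx => by
      obtain ⟨y, hy, hmin⟩ := exists_forall_lt_add_of_bddBelow_image ⟨x, mem_descentSet_self hx⟩
        (hb.mono (Set.image_mono fun _ h => h.1)) (hε n)
      exact ⟨y, hy.1, hy, hmin⟩
  exact ⟨u, hu0, fun n => (hu n).2⟩

theorem exists_mem_descentSet_slopeLE [CompleteSpace X]
    (hφ : ∀ c, IsClosed {x | x ∈ A ∧ φ x ≤ c}) (hb : BddBelow (φ '' A)) (hs : 0 < s)
    (hx : x ∈ A) : ∃ z ∈ descentSet A φ s x, SlopeLE A φ s z := by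
  obtain ⟨u, rfl, hu⟩ := exists_seq_descentSet (s := s) hb hx
    fun n => one_div_pos.2 (Nat.cast_add_one_pos (α := ℝ) n)
  have hanti : Antitone fun n => descentSet A φ s (u n) :=
    antitone_nat_of_succ_le fun n => descentSet_subset_of_mem hs.le (hu n).1
  have hmem : ∀ {n k}, n ≤ k → u (k + 1) ∈ descentSet A φ s (u n) := fun h => hanti h (hu _).1
  have hcauchy : CauchySeq fun n => u (n + 1) := by
    refine cauchySeq_of_le_tendsto_0' (fun n => 1 / ((n : ℝ) + 1) / s) (fun n k hnk => ?_) ?_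
    · obtain rfl | hlt := hnk.eq_or_lt
      · rw [dist_self]; positivity
      · rw [le_div_iff₀' hs]
        linarith [(hmem (Nat.succ_le_of_lt hlt)).2, (hu n).2 _ (hmem hnk)]
    · simpa only [zero_div] using
        (tendsto_one_div_add_atTop_nhds_zero_nat (𝕜 := ℝ)).div_const s
  obtain ⟨z, hz⟩ := cauchySeq_tendsto_of_complete hcauchy
  have hzmem : ∀ n, z ∈ descentSet A φ s (u n) := fun n =>
    (isClosed_descentSet hφ).mem_of_tendsto hz ((eventually_ge_atTop n).mono fun _ => hmem)
  refine ⟨z, hzmem 0, slopeLE_of_forall_mem_descentSet (hzmem 0).1 (fun y hy => ?_) hs.le⟩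
  have hle : ∀ n : ℕ, φ z ≤ φ y + 1 / ((n : ℝ) + 1) := fun n =>
    (le_of_mem_descentSet hs.le (hzmem (n + 1))).trans
      ((hu n).2 y (descentSet_subset_of_mem hs.le (hzmem n) hy)).le
  simpa only [add_zero] using ge_of_tendsto'
    ((tendsto_one_div_add_atTop_nhds_zero_nat (𝕜 := ℝ)).const_add (φ y)) hle

theorem exists_seq_slopeLE [CompleteSpace X] (hφ : ∀ c, IsClosed {x | x ∈ A ∧ φ x ≤ c})
    (hb : BddBelow (φ '' A)) {t : ℕ → ℝ} (ht : ∀ n, 0 < t n) (hx : SlopeLE A φ (t 0) x) :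
    ∃ u : ℕ → X, u 0 = x ∧
      ∀ n, SlopeLE A φ (t n) (u n) ∧ u (n + 1) ∈ descentSet A φ (t (n + 1)) (u n) := by
  refine exists_seq_of_forall_exists (p := fun n => SlopeLE A φ (t n))
    (r := fun n x y => y ∈ descentSet A φ (t (n + 1)) x) hx fun n x hx => ?_
  obtain ⟨z, hz, hslope⟩ := exists_mem_descentSet_slopeLE hφ hb (ht (n + 1)) hx.1
  exact ⟨z, hslope, hz⟩

theorem mul_dist_le_sub_of_antitone {u : ℕ → X} {t a : ℕ → ℝ} (ht : Antitone t)
    (ht0 : ∀ n, 0 ≤ t n) (h : ∀ n, t (n + 1) * dist (u n) (u (n + 1)) ≤ a n - a (n + 1))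
    {N n : ℕ} (hn : N ≤ n) : t n * dist (u N) (u n) ≤ a N - a n := by
  induction n, hn using Nat.le_induction with
  | base => simp only [dist_self, mul_zero, sub_self, le_refl]
  | succ n _ ih =>
    calc t (n + 1) * dist (u N) (u (n + 1))
        ≤ t (n + 1) * dist (u N) (u n) + t (n + 1) * dist (u n) (u (n + 1)) := by
          rw [← mul_add]; exact mul_le_mul_of_nonneg_left (dist_triangle _ _ _) (ht0 _)
      _ ≤ t n * dist (u N) (u n) + (a n - a (n + 1)) :=
          add_le_add (mul_le_mul_of_nonneg_right (ht n.le_succ) dist_nonneg) (h n)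
      _ ≤ a N - a (n + 1) := by linarith

/-- An analogue of Kronecker's lemma for the possibly divergent series `∑ dist (u n) (u (n + 1))`:
the part of the path before `N` is killed by `t n → 0`, the rest costs at most `a N - lim a`. -/
theorem tendsto_mul_dist_zero {u : ℕ → X} {t a : ℕ → ℝ} (ht : Antitone t)
    (ht0 : Tendsto t atTop (𝓝 0)) (ha : BddBelow (Set.range a))
    (h : ∀ n, t (n + 1) * dist (u n) (u (n + 1)) ≤ a n - a (n + 1)) (y : X) :
    Tendsto (fun n => t n * dist (u n) y) atTop (𝓝 0) := by
  have htnn : ∀ n, 0 ≤ t n := ht.le_of_tendsto ht0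
  have haanti : Antitone a := antitone_nat_of_succ_le fun n =>
    sub_nonneg.1 ((mul_nonneg (htnn _) dist_nonneg).trans (h n))
  have halim : Tendsto a atTop (𝓝 (⨅ n, a n)) := tendsto_atTop_ciInf haanti ha
  refine tendsto_order.2 ⟨fun b hb => Eventually.of_forall fun n =>
    hb.trans_le (mul_nonneg (htnn n) dist_nonneg), fun ε hε => ?_⟩
  obtain ⟨N, hN⟩ := (halim.eventually_lt_const (lt_add_of_pos_right _ hε)).exists
  have hlim : Tendsto (fun n => a N - a n + t n * dist (u N) y) atTop
      (𝓝 ((a N - ⨅ n, a n) + 0 * dist (u N) y)) :=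
    (halim.const_sub (a N)).add (ht0.mul_const _)
  have hlt : (a N - ⨅ n, a n) + 0 * dist (u N) y < ε := by linarith
  filter_upwards [eventually_ge_atTop N, hlim.eventually_lt_const hlt] with n hn hnε
  calc t n * dist (u n) y
      ≤ t n * dist (u N) (u n) + t n * dist (u N) y := by
        rw [← mul_add]; exact mul_le_mul_of_nonneg_left (dist_triangle_left _ _ _) (htnn n)
    _ ≤ a N - a n + t n * dist (u N) y :=
        add_le_add_left (mul_dist_le_sub_of_antitone ht htnn h hn) _
    _ < ε := hnε

theorem mul_sub_le_sub_of_slopeLE_seq {u : ℕ → X} {q : ℝ} (hq : 0 ≤ q)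
    (hψ : ∀ n, SlopeLE B ψ (s * q ^ n) (u n))
    (hφ : ∀ n, u (n + 1) ∈ descentSet A φ (s * q ^ (n + 1)) (u n)) (n : ℕ) :
    q * (ψ (u 0) - ψ (u n)) ≤ φ (u 0) - φ (u n) := by
  induction n with
  | zero => simp only [sub_self, mul_zero, le_refl]
  | succ n ih =>
    have hstep : q * (ψ (u n) - ψ (u (n + 1))) ≤ φ (u n) - φ (u (n + 1)) :=
      calc q * (ψ (u n) - ψ (u (n + 1)))
          ≤ q * (s * q ^ n * dist (u n) (u (n + 1))) :=
            mul_le_mul_of_nonneg_left ((hψ n).2 _ (hψ (n + 1)).1) hq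
        _ = s * q ^ (n + 1) * dist (u n) (u (n + 1)) := by ring
        _ ≤ φ (u n) - φ (u (n + 1)) := by linarith [(hφ n).2]
    linarith

variable [CompleteSpace X]

theorem mul_sub_le_sub_of_slopeLE_imp (hφ : ∀ c, IsClosed {x | x ∈ A ∧ φ x ≤ c})
    (hm : m ∈ lowerBounds (φ '' A)) (himp : ∀ x t, 0 < t → SlopeLE A φ t x → SlopeLE B ψ t x)
    (hs : 0 < s) (hx : SlopeLE A φ s x) (hy : y ∈ B) {q : ℝ} (hq0 : 0 < q) (hq1 : q < 1) :
    q * (ψ x - ψ y) ≤ φ x - m := by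
  have ht : ∀ n, 0 < s * q ^ n := fun n => by positivity
  obtain ⟨u, rfl, hu⟩ := exists_seq_slopeLE hφ ⟨m, hm⟩ ht (by simpa only [pow_zero, mul_one])
  have hm' : ∀ n, m ≤ φ (u n) := fun n => hm ⟨u n, (hu n).1.1, rfl⟩
  have hψ : ∀ n, SlopeLE B ψ (s * q ^ n) (u n) := fun n => himp _ _ (ht n) (hu n).1
  have herr : Tendsto (fun n => s * q ^ n * dist (u n) y) atTop (𝓝 0) := by
    refine tendsto_mul_dist_zero (a := fun n => φ (u n))
      ((pow_right_anti₀ hq0.le hq1.le).const_mul hs.le) ?_ ⟨m, Set.forall_mem_range.2 hm'⟩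
      (fun n => le_sub_iff_add_le'.2 (hu n).2.2) y
    simpa only [mul_zero] using (tendsto_pow_atTop_nhds_zero_of_lt_one hq0.le hq1).const_mul s
  have hle : ∀ n, q * (ψ (u 0) - ψ y) ≤ φ (u 0) - m + q * (s * q ^ n * dist (u n) y) := fun n => by
    have htel := mul_sub_le_sub_of_slopeLE_seq hq0.le hψ (fun n => (hu n).2) n
    linarith [hm' n, mul_le_mul_of_nonneg_left ((hψ n).2 y hy) hq0.le]
  simpa only [mul_zero, add_zero] using
    ge_of_tendsto' ((herr.const_mul q).const_add (φ (u 0) - m)) hle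

theorem sub_le_sub_of_slopeLE_imp (hφ : ∀ c, IsClosed {x | x ∈ A ∧ φ x ≤ c})
    (hm : m ∈ lowerBounds (φ '' A)) (himp : ∀ x t, 0 < t → SlopeLE A φ t x → SlopeLE B ψ t x)
    (hs : 0 < s) (hx : SlopeLE A φ s x) (hy : y ∈ B) : ψ x - ψ y ≤ φ x - m := by
  have hlim : Tendsto (fun q : ℝ => q * (ψ x - ψ y)) (𝓝[<] 1) (𝓝 (1 * (ψ x - ψ y))) :=
    (tendsto_id.mul_const _).mono_left nhdsWithin_le_nhds
  rw [one_mul] at hlim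
  refine le_of_tendsto hlim ?_
  filter_upwards [Ioo_mem_nhdsLT zero_lt_one] with q hq
  exact mul_sub_le_sub_of_slopeLE_imp hφ hm himp hs hx hy hq.1 hq.2

theorem exists_seq_tendsto_slopeLE (hφ : ∀ c, IsClosed {x | x ∈ A ∧ φ x ≤ c})
    (hb : BddBelow (φ '' A)) (hx : x ∈ A) :
    ∃ z : ℕ → X, Tendsto z atTop (𝓝 x) ∧ ∀ n, φ (z n) ≤ φ x ∧ SlopeLE A φ (n + 1) (z n) := by
  have hpos : ∀ n : ℕ, (0 : ℝ) < n + 1 := Nat.cast_add_one_pos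
  choose z hz hslope using fun n : ℕ => exists_mem_descentSet_slopeLE hφ hb (hpos n) hx
  refine ⟨z, ?_, fun n => ⟨le_of_mem_descentSet (hpos n).le (hz n), hslope n⟩⟩
  obtain ⟨m, hm⟩ := hb
  have hdist : ∀ n : ℕ, dist (z n) x ≤ (φ x - m) * (1 / ((n : ℝ) + 1)) := fun n => by
    rw [mul_one_div, le_div_iff₀' (hpos n), dist_comm]
    linarith [(hz n).2, hm (Set.mem_image_of_mem φ (hz n).1)]
  refine tendsto_iff_dist_tendsto_zero.2 (squeeze_zero (fun _ => dist_nonneg) hdist ?_)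
  simpa only [mul_zero] using tendsto_one_div_add_atTop_nhds_zero_nat.const_mul (φ x - m)

theorem mem_and_sub_le_sub_of_slopeLE_imp (hφ : ∀ c, IsClosed {x | x ∈ A ∧ φ x ≤ c})
    (hψ : ∀ c, IsClosed {x | x ∈ B ∧ ψ x ≤ c}) (hm : m ∈ lowerBounds (φ '' A))
    (himp : ∀ x t, 0 < t → SlopeLE A φ t x → SlopeLE B ψ t x) (hx : x ∈ A) (hy : y ∈ B) :
    x ∈ B ∧ ψ x - ψ y ≤ φ x - m := by
  obtain ⟨z, hzx, hz⟩ := exists_seq_tendsto_slopeLE hφ ⟨m, hm⟩ hx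
  suffices h : x ∈ B ∧ ψ x ≤ φ x - m + ψ y from ⟨h.1, sub_le_iff_le_add.2 h.2⟩
  refine (hψ _).mem_of_tendsto hzx (Eventually.of_forall fun n => ?_)
  have hpos : (0 : ℝ) < n + 1 := Nat.cast_add_one_pos n
  have hle := sub_le_sub_of_slopeLE_imp hφ hm himp hpos (hz n).2 hy
  exact ⟨(himp _ _ hpos (hz n).2).1, by linarith [(hz n).1]⟩

end RealValued

section ExtendedReal

/-- The effective domain of an extended real function: together with `fun x => (u x).toReal` it is
the real-valued encoding of `u` used in `SlopeLE`, faithful as long as `u` avoids `⊥`. -/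
def effectiveDomain {α : Type*} (u : α → EReal) : Set α :=
  {x | u x ≠ ⊤}

theorem exists_coe_eq_iInf {ι : Sort*} {u : ι → EReal} (hproper : ∃ i, u i ≠ ⊤)
    (hbdd : ∃ m : ℝ, ∀ i, (m : EReal) ≤ u i) : ∃ a : ℝ, (a : EReal) = ⨅ i, u i := by
  obtain ⟨i, hi⟩ := hproper
  obtain ⟨m, hm⟩ := hbdd
  exact ⟨_, EReal.coe_toReal (ne_top_of_le_ne_top hi (iInf_le u i))
    (ne_bot_of_le_ne_bot (EReal.coe_ne_bot m) (le_iInf hm))⟩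

theorem isClosed_effectiveDomain_toReal_le {α : Type*} [TopologicalSpace α] {u : α → EReal}
    (hu : LowerSemicontinuous u) (hbot : ∀ x, u x ≠ ⊥) (c : ℝ) :
    IsClosed {x | x ∈ effectiveDomain u ∧ (u x).toReal ≤ c} := by
  convert hu.isClosed_preimage (c : EReal) using 1
  ext x
  refine ⟨fun ⟨hx, hc⟩ => ?_, fun hc : u x ≤ c => ?_⟩
  · exact (EReal.le_coe_toReal hx).trans (EReal.coe_le_coe_iff.2 hc)
  · exact ⟨ne_top_of_le_ne_top (EReal.coe_ne_top c) hc,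
      EReal.coe_le_coe_iff.1 ((EReal.coe_toReal_le (hbot x)).trans hc)⟩

variable {X : Type*} [MetricSpace X] {f g u : X → EReal}

theorem gslopeE_le_ofReal_iff (hbot : ∀ x, u x ≠ ⊥) {x : X} {s : ℝ} (hs : 0 ≤ s) :
    gslopeE u x ≤ ENNReal.ofReal s ↔
      SlopeLE (effectiveDomain u) (fun x => (u x).toReal) s x := by
  by_cases hx : u x = ⊤
  · simp [gslopeE, SlopeLE, effectiveDomain, hx]
  have hdist : ∀ {y}, y ≠ x → 0 < dist x y := fun hyx => dist_pos.2 hyx.symm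
  rw [gslopeE, if_neg hx, iSup₂_le_iff]
  refine ⟨fun h => ⟨hx, fun y hy => ?_⟩, fun h y hyx => ENNReal.ofReal_le_ofReal ?_⟩
  · obtain rfl | hyx := eq_or_ne y x
    · simp only [sub_self, dist_self, mul_zero, le_refl]
    · rw [← EReal.toReal_sub hx (hbot x) hy (hbot y), ← div_le_iff₀ (hdist hyx)]
      exact (ENNReal.ofReal_le_ofReal_iff hs).1 (h y hyx)
  · rw [div_le_iff₀ (hdist hyx)]
    by_cases hy : u y = ⊤
    · rw [hy, EReal.sub_top, EReal.toReal_bot]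
      positivity
    · rw [EReal.toReal_sub hx (hbot x) hy (hbot y)]
      exact h.2 y hy

variable [CompleteSpace X]

theorem add_le_add_of_gslopeE_le (hf : LowerSemicontinuous f) (hg : LowerSemicontinuous g)
    (hfbot : ∀ x, f x ≠ ⊥) {m : ℝ} (hm : ∀ x, (m : EReal) ≤ g x)
    (hle : ∀ x, gslopeE f x ≤ gslopeE g x) (x y : X) : f x + m ≤ g x + f y := by
  have hgbot : ∀ x, g x ≠ ⊥ := fun x => ne_bot_of_le_ne_bot (EReal.coe_ne_bot m) (hm x)
  by_cases hx : g x = ⊤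
  · rw [hx, EReal.top_add_of_ne_bot (hfbot y)]
    exact le_top
  by_cases hy : f y = ⊤
  · rw [hy, EReal.add_top_of_ne_bot (hgbot x)]
    exact le_top
  obtain ⟨hfx, hxy⟩ := mem_and_sub_le_sub_of_slopeLE_imp (m := m)
    (isClosed_effectiveDomain_toReal_le hg hgbot) (isClosed_effectiveDomain_toReal_le hf hfbot)
    (Set.forall_mem_image.2 fun z hz =>
      EReal.coe_le_coe_iff.1 ((hm z).trans (EReal.le_coe_toReal hz)))
    (fun z t ht hz => (gslopeE_le_ofReal_iff hfbot ht.le).1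
      ((hle z).trans ((gslopeE_le_ofReal_iff hgbot ht.le).2 hz))) hx hy
  rw [← EReal.coe_toReal hfx (hfbot x), ← EReal.coe_toReal hx (hgbot x),
    ← EReal.coe_toReal hy (hfbot y)]
  exact_mod_cast (by linarith : (f x).toReal + m ≤ (g x).toReal + (f y).toReal)

theorem exists_coe_le_of_gslopeE_le (hf : LowerSemicontinuous f) (hg : LowerSemicontinuous g)
    (hfbot : ∀ x, f x ≠ ⊥) (hgproper : ∃ x, g x ≠ ⊤) (hgbdd : ∃ m : ℝ, ∀ x, (m : EReal) ≤ g x)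
    (hle : ∀ x, gslopeE f x ≤ gslopeE g x) : ∃ m : ℝ, ∀ x, (m : EReal) ≤ f x := by
  obtain ⟨x, hx⟩ := hgproper
  obtain ⟨m, hm⟩ := hgbdd
  refine ⟨(f x).toReal + m - (g x).toReal, fun y => ?_⟩
  push_cast
  refine EReal.sub_le_of_le_add' ?_
  calc ((f x).toReal : EReal) + m ≤ f x + m := by gcongr; exact EReal.coe_toReal_le (hfbot x)
    _ ≤ g x + f y := add_le_add_of_gslopeE_le hf hg hfbot hm hle x y
    _ ≤ (g x).toReal + f y := by gcongr; exact EReal.le_coe_toReal hx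

theorem sub_iInf_le_sub_iInf_of_gslopeE_le (hf : LowerSemicontinuous f)
    (hg : LowerSemicontinuous g) (hfbot : ∀ x, f x ≠ ⊥) (hgproper : ∃ x, g x ≠ ⊤)
    (hgbdd : ∃ m : ℝ, ∀ x, (m : EReal) ≤ g x) (hle : ∀ x, gslopeE f x ≤ gslopeE g x) (x : X) :
    f x - ⨅ y, f y ≤ g x - ⨅ y, g y := by
  obtain ⟨b, hb⟩ := exists_coe_eq_iInf hgproper hgbdd
  have hbg : ∀ x, (b : EReal) ≤ g x := fun x => hb ▸ iInf_le g x
  rw [← hb]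
  by_cases hx : g x = ⊤
  · rw [hx, EReal.top_sub_coe]
    exact le_top
  lift g x to ℝ using ⟨hx, ne_bot_of_le_ne_bot (EReal.coe_ne_bot b) (hbg x)⟩ with r hr
  have hinf : f x + b - r ≤ ⨅ y, f y := le_iInf fun y =>
    EReal.sub_le_of_le_add' (hr ▸ add_le_add_of_gslopeE_le hf hg hfbot hbg hle x y)
  have hadd : f x + b ≤ (⨅ y, f y) + r :=
    (EReal.sub_le_iff_le_add (.inl (EReal.coe_ne_bot r)) (.inl (EReal.coe_ne_top r))).1 hinf
  have hsub : f x ≤ (⨅ y, f y) + r - b :=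
    (EReal.le_sub_iff_add_le (.inl (EReal.coe_ne_bot b)) (.inl (EReal.coe_ne_top b))).2 hadd
  refine EReal.sub_le_of_le_add' ?_
  rwa [sub_eq_add_neg, add_assoc, ← sub_eq_add_neg] at hsub

end ExtendedReal

/-- Determination result: on a complete metric space, if `f, g : X → ℝ ∪ {+∞}` are proper lsc,
`g` is bounded from below and `G[f] ≤ G[g]` everywhere, then `f` is bounded from below and
`f - inf f ≤ g - inf g`; consequently, if `G[f] = G[g]` everywhere then `f = g + c` for a
real constant `c`. -/
theorem gslope_le_determination {X : Type*} [MetricSpace X] [CompleteSpace X]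
    (f g : X → EReal)
    (hf : LowerSemicontinuous f) (hg : LowerSemicontinuous g)
    (hfbot : ∀ x, f x ≠ ⊥) (hgbot : ∀ x, g x ≠ ⊥)
    (hfproper : ∃ x, f x ≠ ⊤) (hgproper : ∃ x, g x ≠ ⊤)
    (hgbdd : ∃ m : ℝ, ∀ x, (m : EReal) ≤ g x)
    (hle : ∀ x, gslopeE f x ≤ gslopeE g x) :
    (∃ m : ℝ, ∀ x, (m : EReal) ≤ f x) ∧
    (∀ x, f x - (⨅ y, f y) ≤ g x - (⨅ y, g y)) ∧
    ((∀ x, gslopeE f x = gslopeE g x) → ∃ c : ℝ, ∀ x, f x = g x + (c : EReal)) := by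
  have hfbdd := exists_coe_le_of_gslopeE_le hf hg hfbot hgproper hgbdd hle
  have hfg := sub_iInf_le_sub_iInf_of_gslopeE_le hf hg hfbot hgproper hgbdd hle
  refine ⟨hfbdd, hfg, fun heq => ?_⟩
  have hgf := sub_iInf_le_sub_iInf_of_gslopeE_le hg hf hgbot hfproper hfbdd fun x => (heq x).ge
  obtain ⟨a, ha⟩ := exists_coe_eq_iInf hfproper hfbdd
  obtain ⟨b, hb⟩ := exists_coe_eq_iInf hgproper hgbdd
  refine ⟨a - b, fun x => ?_⟩
  have hsub : f x - a = g x - b := by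
    rw [ha, hb]
    exact (hfg x).antisymm (hgf x)
  calc f x = f x - a + a := EReal.sub_add_cancel.symm
    _ = g x - b + a := by rw [hsub]
    _ = g x + ((a - b : ℝ) : EReal) := by
      rw [EReal.coe_sub, sub_eq_add_neg, sub_eq_add_neg, add_assoc, add_comm (-_)]
end
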